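/- Let P be a graded poset and let x < y < w be three elements of P. Then for any element z ∈ P ∪ {−1̂} with z < w, the relation [x,y] <_{T(P)} [z,w] holds in the Tchebyshev transform T(P) if and only if z = x or y ≤ z < w. -/

import Mathlib

open scoped TensorProduct

noncomputable section

namespace Tcheb

/-! ### The algebra `R⟨a,b⟩` of ab-polynomials -/

/-- Words in the two noncommuting letters `a` (encoded `true`) and `b` (encoded `false`). -/
abbrev ABWord : Type := FreeMonoid Bool

/-- The ring `R⟨a,b⟩` of polynomials in two noncommuting variables `a` and `b`. -/
abbrev AB (R : Type) [CommRing R] : Type := MonoidAlgebra R ABWord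

variable (R : Type) [CommRing R]

/-- The ab-monomial corresponding to a word. -/
def word (l : List Bool) : AB R := MonoidAlgebra.of R ABWord (FreeMonoid.ofList l)

/-- The variable `a`. -/
def av : AB R := word R [true]
/-- The variable `b`. -/
def bv : AB R := word R [false]
/-- `c = a + b`. -/
def cv : AB R := av R + bv R
/-- `d = ab + ba`. -/
def dv : AB R := av R * bv R + bv R * av R
/-- `a - b`. -/
def ev : AB R := av R - bv R

/-- The linear map defined by prescribing values on the basis of ab-monomials. -/
def onBasis {M : Type} [AddCommMonoid M] [Module R M] (f : List Bool → M) :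
    AB R →ₗ[R] M :=
  (Finsupp.lift M R ABWord fun w => f (FreeMonoid.toList w)) ∘ₗ
    (MonoidAlgebra.coeffLinearEquiv R : AB R ≃ₗ[R] (ABWord →₀ R)).toLinearMap

/-- The algebra map `A` with `A(a) = 1`, `A(b) = 0`. -/
def Amap : AB R →ₐ[R] R :=
  MonoidAlgebra.lift R R ABWord (FreeMonoid.lift fun x => if x then (1 : R) else 0)

/-- The coproduct on `R⟨a,b⟩`: on an ab-monomial `u₁ ⋯ u_k` it is
`Σ_{i=1}^k u₁ ⋯ u_{i-1} ⊗ u_{i+1} ⋯ u_k`. -/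
def Delta : AB R →ₗ[R] AB R ⊗[R] AB R :=
  onBasis R fun w => ∑ i ∈ Finset.range w.length,
    word R (w.take i) ⊗ₜ[R] word R (w.drop (i + 1))

/-- The linear map `C(u) = 2·A(u) + Σ_u A(u₍₁₎)·A(u₍₂₎)`. -/
def Cmap : AB R →ₗ[R] R :=
  2 • (Amap R).toLinearMap +
    (LinearMap.mul' R R ∘ₗ
      TensorProduct.map (Amap R).toLinearMap (Amap R).toLinearMap) ∘ₗ Delta R

/-- `κ(u) = A(u)·(a-b)^(deg u)` on homogeneous `u`, extended linearly. -/
def kappa : AB R →ₗ[R] AB R :=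
  onBasis R fun w => Amap R (word R w) • ev R ^ w.length

/-- `ν(u) = C(u)·(a-b)^(deg u)` on homogeneous `u`, extended linearly. -/
def nuMap : AB R →ₗ[R] AB R :=
  onBasis R fun w => Cmap R (word R w) • ev R ^ w.length

end Tcheb

namespace Tcheb

/-- Cutting a word into the list of segments between the (sorted) cut positions. -/
def segments : List Bool → List ℕ → List (List Bool)
  | l, [] => [l]
  | l, i :: rest => l.take i :: segments (l.drop (i + 1)) (rest.map fun j => j - (i + 1))
  termination_by _ cuts => cuts.length
  decreasing_by simp

variable (R : Type) [CommRing R]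

/-- For segments `[s₁, …, s_k]` this is `ν(s₁)·b·ν(s₂)·b ⋯ b·ν(s_{k-1})·b·κ(s_k)`. -/
def chainProd : List (List Bool) → AB R
  | [] => 1
  | [s] => kappa R (word R s)
  | s :: rest => nuMap R (word R s) * bv R * chainProd rest

/-- The Tchebyshev transform (of the first kind) on ab-polynomials:
`T(u) = Σ_{k ≥ 1} Σ_u ν(u₍₁₎)·b·ν(u₍₂₎)·b ⋯ b·ν(u₍ₖ₋₁₎)·b·κ(u₍ₖ₎)`,
where the inner sum is over the `k`-fold coproduct.  On the ab-monomial basis this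
is the sum, over all sets of positions of deleted letters, of the corresponding
products over the resulting segments. -/
def Tmap : AB R →ₗ[R] AB R :=
  onBasis R fun w => ∑ S : Finset (Fin w.length),
    chainProd R (segments w ((S.sort (· ≤ ·)).map Fin.val))

/-- The `ω` map on a word: replace each occurrence of `ab` by `2d` and all
remaining letters by `c`. -/
def omegaWord : List Bool → AB R
  | [] => 1
  | true :: false :: rest => (2 * dv R) * omegaWord rest
  | _ :: rest => cv R * omegaWord rest

/-- The `ω` map of Billera–Ehrenborg–Readdy. -/
def omegaMap : AB R →ₗ[R] AB R := onBasis R fun w => omegaWord R w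

/-- The reversal involution `u ↦ u*` of ab-polynomials. -/
def revMap : AB R →ₗ[R] AB R := onBasis R fun w => word R w.reverse

/-- `H*(1) = 0` and `H*(u·a) = H*(u·b) = u`. -/
def Hstar : AB R →ₗ[R] AB R :=
  onBasis R fun w => if w = [] then 0 else word R w.dropLast

/-- The Tchebyshev transform of the second kind `U(u) = H*(T(u·a))`. -/
def Umap : AB R →ₗ[R] AB R := Hstar R ∘ₗ Tmap R ∘ₗ LinearMap.mulRight R (av R)

/-- `σ(u) = Σ_u κ(u₍₁₎)·b·T(u₍₂₎)`. -/
def sigmaMap : AB R →ₗ[R] AB R :=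
  LinearMap.mul' R (AB R) ∘ₗ
    TensorProduct.map (LinearMap.mulRight R (bv R) ∘ₗ kappa R) (Tmap R) ∘ₗ Delta R

/-! ### Graded posets and the ab-index -/

/-- `rk` is a rank function for a bounded poset: `rk ⊥ = 0` and covers raise rank by one. -/
def IsRankFun (α : Type) [PartialOrder α] [OrderBot α] (rk : α → ℕ) : Prop :=
  rk ⊥ = 0 ∧ ∀ x y : α, x ⋖ y → rk y = rk x + 1

/-- `f` lists the elements of a chain in increasing order with respect to the
strict order relation `lt`. -/
def IsStrictChain {α : Type} (lt : α → α → Prop) {n : ℕ} (f : Fin (n + 1) → α) : Prop :=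
  ∀ i j : Fin (n + 1), i < j → lt (f i) (f j)

/-- The weight of a chain `x₀ < x₁ < ⋯ < x_k`:
`(a-b)^{ρ(x₀,x₁)-1}·b·(a-b)^{ρ(x₁,x₂)-1}·b ⋯ b·(a-b)^{ρ(x_{k-1},x_k)-1}`. -/
def chainWt {α : Type} (rk : α → ℕ) {n : ℕ} (f : Fin (n + 1) → α) : AB R :=
  (List.intersperse (bv R)
    (List.ofFn fun i : Fin n => ev R ^ (rk (f i.succ) - rk (f i.castSucc) - 1))).prod

/-- The ab-index `Ψ` of the graded poset with strict order relation `lt`, rank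
function `rk`, minimum `b` and maximum `t`: the sum of the weights of all chains
from `b` to `t`. -/
def PsiRel {α : Type} (lt : α → α → Prop) (rk : α → ℕ) (b t : α) : AB R :=
  ∑ᶠ (n : ℕ), ∑ᶠ (f : Fin (n + 1) → α)
    (_ : IsStrictChain lt f ∧ f 0 = b ∧ f (Fin.last n) = t), chainWt R rk f

end Tcheb

namespace Tcheb

/-! ### The Tchebyshev transform of a graded poset -/

section TPoset

variable (α : Type) [PartialOrder α] [BoundedOrder α]

/-- The elements `[x,y]` of the Tchebyshev transform: intervals of `P ∪ {-1̂}`,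
i.e. pairs `(x,y)` with `x ∈ P ∪ {-1̂}`, `y ∈ P` and `x < y`. -/
def TPel : Type := {p : WithBot α × α // p.1 < (p.2 : WithBot α)}

/-- The underlying set of the Tchebyshev transform `T(P)`: the intervals `[x,y]`
together with a new maximum element (`none`). -/
def TP : Type := Option (TPel α)

/-- The cover relation of the Tchebyshev transform `T(P)`:
`[x,y] ⋖ [y,w]` and `[x,y] ⋖ [x,w]` whenever `y ⋖ w` in `P`, and `[x,1̂] ⋖ 1̂_{T(P)}`. -/
inductive TPcov : TP α → TP α → Prop
  | up {x : WithBot α} {y w : α} (h1 : x < (y : WithBot α))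
      (h2 : (y : WithBot α) < (w : WithBot α)) (hc : y ⋖ w) :
      TPcov (some ⟨(x, y), h1⟩) (some ⟨((y : WithBot α), w), h2⟩)
  | same {x : WithBot α} {y w : α} (h1 : x < (y : WithBot α))
      (h2 : x < (w : WithBot α)) (hc : y ⋖ w) :
      TPcov (some ⟨(x, y), h1⟩) (some ⟨(x, w), h2⟩)
  | top {x : WithBot α} (h1 : x < ((⊤ : α) : WithBot α)) :
      TPcov (some ⟨(x, (⊤ : α)), h1⟩) none

/-- The strict order relation of `T(P)`, generated by the cover relation. -/
def TPlt : TP α → TP α → Prop := Relation.TransGen (TPcov α)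

/-- The order relation of `T(P)`, generated by the cover relation. -/
def TPle : TP α → TP α → Prop := Relation.ReflTransGen (TPcov α)

/-- The minimum element `[-1̂, 0̂]` of `T(P)`. -/
def TPbot : TP α := some ⟨((⊥ : WithBot α), (⊥ : α)), WithBot.bot_lt_coe _⟩

/-- The maximum element `1̂_{T(P)}` of `T(P)`. -/
def TPtop : TP α := none

/-- The rank function of `T(P)`: `ρ([x,y]) = ρ(y)` and `ρ(1̂_{T(P)}) = ρ(P) + 1`. -/
def TPrk (rk : α → ℕ) : TP α → ℕ
  | some p => rk p.1.2
  | none => rk (⊤ : α) + 1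

theorem TPbot_ne_TPtop : TPbot α ≠ TPtop α := Option.some_ne_none _

/-- The map `z : T(P) → P ∪ {2̂}` with `z([x,y]) = y` and `z(1̂_{T(P)}) = 2̂`. -/
def zmap : TP α → WithTop α
  | some p => (p.1.2 : WithTop α)
  | none => ⊤

/-- The number of elements of the interval `[u,v]` of `P`, for `u, v ∈ P ∪ {2̂}`. -/
def intervalCard (u v : WithTop α) : ℕ :=
  Set.ncard {t : α | u ≤ (t : WithTop α) ∧ (t : WithTop α) ≤ v}

end TPoset

/-! ### The dual diamond product -/

/-- The strict order relation of the dual diamond product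
`P ◇* Q = ((P ∖ {1̂}) × (Q ∖ {1̂})) ∪ {1̂}` (with `none` the new maximum), built from
the order relations `leA, ltA` and `leB, ltB` of the two factors. -/
def dsLT {A B : Type} (leA ltA : A → A → Prop) (leB ltB : B → B → Prop) :
    Option (A × B) → Option (A × B) → Prop
  | some p, some q => (leA p.1 q.1 ∧ leB p.2 q.2) ∧ (ltA p.1 q.1 ∨ ltB p.2 q.2)
  | some _, none => True
  | none, _ => False

/-! ### EL-labelings -/

/-- The list of edge labels along a chain (given as a list of poset elements). -/
def labelsList {α Λ : Type} (lam : α → α → Λ) (l : List α) : List Λ :=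
  (l.zip l.tail).map fun p => lam p.1 p.2

/-- `l` is a maximal (saturated) chain of the interval `[x,y]` with respect to the
cover relation `cov`: it runs from `x` to `y` and every step is a cover. -/
def IsMaxChainList {α : Type} (cov : α → α → Prop) (x y : α) (l : List α) : Prop :=
  l.head? = some x ∧ l.getLast? = some y ∧ l.Chain' cov

/-- An `EL`-labeling of the poset whose cover relation is `cov`, with labels in the
linearly ordered set `(Λ, lle, llt)`: every interval has a unique rising maximal
chain, which moreover is lexicographically least among all maximal chains of the
interval. -/
def IsELLabeling (α Λ : Type) (lle llt : Λ → Λ → Prop)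
    (cov : α → α → Prop) (lam : α → α → Λ) : Prop :=
  ∀ x y : α, Relation.ReflTransGen cov x y →
    ∃ l : List α, (IsMaxChainList cov x y l ∧ (labelsList lam l).Chain' lle) ∧
      (∀ l' : List α, IsMaxChainList cov x y l' →
        (labelsList lam l').Chain' lle → l' = l) ∧
      (∀ l' : List α, IsMaxChainList cov x y l' →
        labelsList lam l = labelsList lam l' ∨
          List.Lex llt (labelsList lam l) (labelsList lam l'))

/-! ### Eulerian posets -/

/-- A graded poset is Eulerian if every nontrivial interval `[x,y]` has the
same number of elements of even rank as of odd rank. -/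
def IsEulerian (α : Type) [PartialOrder α] (rk : α → ℕ) : Prop :=
  ∀ x y : α, x < y →
    Set.ncard {z : α | x ≤ z ∧ z ≤ y ∧ Even (rk z)} =
      Set.ncard {z : α | x ≤ z ∧ z ≤ y ∧ ¬ Even (rk z)}

/-! ### The face lattice of the crosspolytope -/

/-- A face of the `n`-dimensional crosspolytope: a partial sign vector, i.e. the
pair `(S, ε)` of a subset `S ⊆ {1,…,n}` (the set of coordinates where the function
takes a value `some`) together with a sign function `ε` on `S`. -/
def CrossEl (n : ℕ) : Type := Fin n → Option Bool

/-- `(S,ε) ≤ (T,δ)` iff `S ⊆ T` and `δ` restricted to `S` is `ε`. -/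
instance (n : ℕ) : PartialOrder (CrossEl n) where
  le f g := ∀ i s, f i = some s → g i = some s
  le_refl f i s h := h
  le_trans f g h fg gh i s hi := gh i s (fg i s hi)
  le_antisymm f g fg gf := by
    funext i
    cases hf : f i with
    | some s => exact (fg i s hf).symm
    | none =>
      cases hg : g i with
      | some s => exact absurd (gf i s hg) (by simp [hf])
      | none => rfl

/-- The face lattice of the `n`-dimensional crosspolytope: all partial sign
vectors together with a new maximum element. -/
abbrev Cross (n : ℕ) : Type := WithTop (CrossEl n)

/-- The rank function of the face lattice of the crosspolytope:
`ρ(S,ε) = |S|` and the maximum has rank `n + 1`. -/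
def crossRk (n : ℕ) : Cross n → ℕ
  | none => n + 1
  | some f => (Finset.univ.filter fun i : Fin n => (f i).isSome).card

/-- The minimal element (the empty face) of the crosspolytope face lattice. -/
def crossBot (n : ℕ) : Cross n := WithTop.some (fun _ => none)

/-- The maximal element of the crosspolytope face lattice. -/
def crossTop (n : ℕ) : Cross n := ⊤

/-! ### Quasisymmetric functions -/

/-- The monomial quasisymmetric function `M_{(p₁,…,p_k)}`, as a formal power
series in the countably many commuting variables `t₁, t₂, …` (indexed by `ℕ`). -/
def MQ (R : Type) [CommRing R] (ps : List ℕ) : MvPowerSeries ℕ R :=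
  fun m => if ((m.support.sort (· ≤ ·)).map fun i => m i) = ps then 1 else 0

/-- The `t`-part of a monomial in the variables `s` (index `none`) and
`t₁, t₂, …` (indices `some i`). -/
def tpart (m : Option ℕ →₀ ℕ) : ℕ →₀ ℕ :=
  Finsupp.comapDomain some m (Option.some_injective ℕ).injOn

/-- The type B monomial quasisymmetric function `s^p · M_{(p₁,…,p_k)}`, a formal
power series in the variables `s` (index `none`) and `t₁, t₂, …` (indices `some i`). -/
def MB (R : Type) [CommRing R] (p : ℕ) (ps : List ℕ) : MvPowerSeries (Option ℕ) R :=
  fun m => if m none = p ∧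
      (((tpart m).support.sort (· ≤ ·)).map fun i => tpart m i) = ps then 1 else 0

/-- The quasisymmetric function `F(P)` of the graded poset with strict order
relation `lt`, rank function `rk`, minimum `b` and maximum `t`:
`F(P) = Σ_c M_{(ρ(x₀,x₁),…,ρ(x_{k-1},x_k))}` over all chains `c` from `b` to `t`. -/
def FQ (R : Type) [CommRing R] {α : Type} (lt : α → α → Prop) (rk : α → ℕ)
    (b t : α) : MvPowerSeries ℕ R :=
  ∑ᶠ (n : ℕ), ∑ᶠ (f : Fin (n + 1) → α)
    (_ : IsStrictChain lt f ∧ f 0 = b ∧ f (Fin.last n) = t),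
    MQ R (List.ofFn fun i : Fin n => rk (f i.succ) - rk (f i.castSucc))

/-- The type B quasisymmetric function `F_B(P) = Σ_{0̂ < x ≤ 1̂} s^{ρ(x)-1}·F([x,1̂])`,
written as a sum over all chains `0̂ < x₀ < x₁ < ⋯ < x_k = 1̂` of
`s^{ρ(x₀)-1}·M_{(ρ(x₀,x₁),…,ρ(x_{k-1},x_k))}`. -/
def FB (R : Type) [CommRing R] {α : Type} (lt : α → α → Prop) (rk : α → ℕ)
    (b t : α) : MvPowerSeries (Option ℕ) R :=
  ∑ᶠ (n : ℕ), ∑ᶠ (f : Fin (n + 1) → α)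
    (_ : IsStrictChain lt f ∧ lt b (f 0) ∧ f (Fin.last n) = t),
    MB R (rk (f 0) - 1) (List.ofFn fun i : Fin n => rk (f i.succ) - rk (f i.castSucc))

/-! ### Characters and the chain maps -/

/-- A character on `k⟨a,b⟩`: a linear functional which is multiplicative with
respect to Cartesian products of graded posets (of rank at least 1). -/
def IsCharacter (k : Type) [Field k] (G : AB k →ₗ[k] k) : Prop :=
  ∀ (α β : Type) [Fintype α] [Fintype β] [PartialOrder α] [PartialOrder β]
    [BoundedOrder α] [BoundedOrder β], ∀ (rkα : α → ℕ) (rkβ : β → ℕ),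
    IsRankFun α rkα → IsRankFun β rkβ → 1 ≤ rkα ⊤ → 1 ≤ rkβ ⊤ →
    G (PsiRel k (· < ·) (fun p : α × β => rkα p.1 + rkβ p.2)
        ((⊥ : α), (⊥ : β)) ((⊤ : α), (⊤ : β))) =
      G (PsiRel k (· < ·) rkα ⊥ ⊤) * G (PsiRel k (· < ·) rkβ ⊥ ⊤)

/-- The quasisymmetric function image `g̃F(P)` of the chain map of the second kind:
`Σ_c G(Ψ([x₀,x₁])) ⋯ G(Ψ([x_{k-1},x_k])) · M_{(ρ(x₀,x₁),…,ρ(x_{k-1},x_k))}`,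
summed over all chains `c = {b = x₀ < ⋯ < x_k = t}`. -/
def gtF (k : Type) [Field k] (G : AB k →ₗ[k] k) {α : Type} (lt : α → α → Prop)
    (rk : α → ℕ) (b t : α) : MvPowerSeries ℕ k :=
  ∑ᶠ (n : ℕ), ∑ᶠ (f : Fin (n + 1) → α)
    (_ : IsStrictChain lt f ∧ f 0 = b ∧ f (Fin.last n) = t),
    (∏ i : Fin n, G (PsiRel k lt rk (f i.castSucc) (f i.succ))) •
      MQ k (List.ofFn fun i : Fin n => rk (f i.succ) - rk (f i.castSucc))

/-- The type B quasisymmetric function image `gF_B(P) = Σ_{0̂ < x ≤ 1̂}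
s^{ρ(x)-1}·g̃F([x,1̂])` of the chain map of the first kind, written as a sum over
all chains `0̂ < x₀ < ⋯ < x_k = 1̂`. -/
def gFB (k : Type) [Field k] (G : AB k →ₗ[k] k) {α : Type} (lt : α → α → Prop)
    (rk : α → ℕ) (b t : α) : MvPowerSeries (Option ℕ) k :=
  ∑ᶠ (n : ℕ), ∑ᶠ (f : Fin (n + 1) → α)
    (_ : IsStrictChain lt f ∧ lt b (f 0) ∧ f (Fin.last n) = t),
    (∏ i : Fin n, G (PsiRel k lt rk (f i.castSucc) (f i.succ))) •
      MB k (rk (f 0) - 1) (List.ofFn fun i : Fin n => rk (f i.succ) - rk (f i.castSucc))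

/-- The space of homogeneous ab-polynomials of degree `n`. -/
def ABhomog (k : Type) [Field k] (n : ℕ) : Submodule k (AB k) :=
  Submodule.span k {x : AB k | ∃ w : List Bool, w.length = n ∧ x = word k w}

/-- Moving up with a fixed first coordinate. -/
theorem TPle_same (α : Type) [Fintype α] [PartialOrder α] [BoundedOrder α]
    (x : WithBot α) (y : α) (hxy : x < (y : WithBot α)) (w : α) (hyw : y ≤ w)
    (hxw : x < (w : WithBot α)) :
    Relation.ReflTransGen (TPcov α) (some ⟨(x, y), hxy⟩) (some ⟨(x, w), hxw⟩) := by
  induction y using WellFoundedGT.induction with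
  | ind y ih =>
    rcases hyw.eq_or_lt with rfl | hlt
    · exact Relation.ReflTransGen.refl
    · obtain ⟨v, hv, hvw⟩ := exists_covBy_le_of_lt hlt
      have hxv : x < (v : WithBot α) := hxy.trans (WithBot.coe_lt_coe.2 hv.lt)
      exact Relation.ReflTransGen.head (TPcov.same hxy hxv hv) (ih v hv.lt hxv hvw)

/-- Invariant satisfied by everything above `[x,y]` in `T(P)`. -/
def TPinv (α : Type) [PartialOrder α] [BoundedOrder α] (x : WithBot α) (y : α) :
    TP α → Prop
  | some p => y ≤ p.1.2 ∧ (p.1.1 = x ∨ (y : WithBot α) ≤ p.1.1)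
  | none => True

theorem TPinv_step (α : Type) [PartialOrder α] [BoundedOrder α] (x : WithBot α) (y : α)
    (p q : TP α) (h : TPcov α p q) (hp : TPinv α x y p) : TPinv α x y q := by
  cases h with
  | up h1 h2 hc => exact ⟨hp.1.trans hc.le, Or.inr (WithBot.coe_le_coe.2 hp.1)⟩
  | same h1 h2 hc => exact ⟨hp.1.trans hc.le, hp.2⟩
  | top h1 => trivial

theorem TPinv_le (α : Type) [PartialOrder α] [BoundedOrder α] (x : WithBot α) (y : α)
    (p q : TP α) (h : Relation.TransGen (TPcov α) p q) (hp : TPinv α x y p) :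
    TPinv α x y q := by
  induction h with
  | single h => exact TPinv_step α x y _ _ h hp
  | tail _ h ih => exact TPinv_step α x y _ _ h ih

theorem tchebyshev_order_characterization
    (α : Type) [Fintype α] [PartialOrder α] [BoundedOrder α]
    (rk : α → ℕ) (hrk : IsRankFun α rk)
    (x y w : α) (hxy : x < y) (hyw : y < w)
    (z : WithBot α) (hzw : z < (w : WithBot α)) :
    TPlt α (some ⟨((x : WithBot α), y), WithBot.coe_lt_coe.2 hxy⟩)
        (some ⟨(z, w), hzw⟩) ↔
      z = (x : WithBot α) ∨ ((y : WithBot α) ≤ z ∧ z < (w : WithBot α)) := by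
  constructor
  · intro h
    have h3 := TPinv_le α (x : WithBot α) y _ _ h ⟨le_rfl, Or.inl rfl⟩
    exact h3.2.imp id fun h4 => ⟨h4, hzw⟩
  · rintro (rfl | ⟨hyz, -⟩)
    · obtain ⟨v, hv, hvw⟩ := exists_covBy_le_of_lt hyw
      have hxv : (x : WithBot α) < (v : WithBot α) := WithBot.coe_lt_coe.2 (hxy.trans hv.lt)
      exact Relation.TransGen.head' (TPcov.same _ hxv hv) (TPle_same α _ v hxv w hvw hzw)
    · induction z with
      | bot => exact absurd hyz (WithBot.bot_lt_coe y).not_ge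
      | coe z =>
        have hyz' : y ≤ z := WithBot.coe_le_coe.1 hyz
        obtain ⟨v, hv, hvw⟩ := exists_covBy_le_of_lt (WithBot.coe_lt_coe.1 hzw)
        have hxz : (x : WithBot α) < (z : WithBot α) :=
          WithBot.coe_lt_coe.2 (hxy.trans_le hyz')
        have hzv : (z : WithBot α) < (v : WithBot α) := WithBot.coe_lt_coe.2 hv.lt
        exact Relation.TransGen.trans_right (TPle_same α _ y _ z hyz' hxz)
          (Relation.TransGen.head' (TPcov.up hxz hzv hv) (TPle_same α _ v hzv w hvw hzw))

end Tcheb
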